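/- arXiv:1609.03122 — 2 statements merged into one kernel-verified Lean document; each statement's English description precedes it below -/
import Mathlib

section
/- Let ξ = e^{2πi/3}, Γ₁ = ℤ[ξ] the hexagonal lattice, and Γ₂ = ⟨u, v⟩_ℤ for ℝ-linearly independent u, v ∈ ℤ[ξ]. If Im_h(u·conj(v)) divides each of Re_h(u²), Re_h(v²), and Re_h(uv), but divides none of N(u), N(v), and Re_h(u·conj(v)), then the point group of the color group H of the coloring of Γ₁ determined by Γ₂ has order 4 and consists of the identity, the 180°-rotation z ↦ −z, and a pair {s, −s} of reflections from the point group of ℤ[ξ] (so the color group is of type cmm). -/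
open Complex

/-- A symmetry `h` of the plane (identified with `ℂ`) is a *color symmetry* of the
coloring of `Γ₁` determined by its subgroup `Γ₂` (each coset of `Γ₂` is one color) if
there is a permutation `σ` of the colors with `c (h ℓ) = σ (c ℓ)` for all `ℓ ∈ Γ₁`. -/
def IsColorSymmetry (Γ₁ Γ₂ : AddSubgroup ℂ) (h : ℂ → ℂ) : Prop :=
  ∃ σ : Equiv.Perm (ℂ ⧸ Γ₂), ∀ ℓ ∈ Γ₁,
    (QuotientAddGroup.mk (h ℓ) : ℂ ⧸ Γ₂) = σ (QuotientAddGroup.mk ℓ)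

/-- The point group `P(H)` of the color group `H` of the coloring of `Γ₁` determined by
`Γ₂`: all isometries of the plane fixing the origin, mapping `Γ₁` onto itself, and
permuting the colors. -/
def pointColorGroup (Γ₁ Γ₂ : AddSubgroup ℂ) : Set (ℂ → ℂ) :=
  {g | Isometry g ∧ Function.Surjective g ∧ g 0 = 0 ∧
    g '' (Γ₁ : Set ℂ) = Γ₁ ∧ IsColorSymmetry Γ₁ Γ₂ g}

/-!
An element of the point group of the color group is a linear isometry, that is `z ↦ a z` or
`z ↦ a conj z`, which preserves both `Γ₁ = ℤ[ξ]` and `Γ₂ = ⟨u, v⟩`. Put `D = Im_h(u conj v)`. By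
Cramer's rule `D w = Im_h(w conj v) u - Im_h(w conj u) v`, so if `D ≠ 0`, membership of `w` in `Γ₂`
means that `D` divides `Im_h(w conj v)` and `Im_h(w conj u)`.

* Since `Im_h(ξ conj w) = Re_h(w)`, the reflection `z ↦ ξ conj z` preserves `Γ₂` when `D` divides
  `Re_h(u²)`, `Re_h(v²)` and `Re_h(uv)`. (If `D = 0`, then `Re_h(u²) = Re_h(v²) = 0` says that the
  reflection sends each of `u` and `v` to itself or its negative.)
* If the rotation by a unit `a` preserves `Γ₂`, then `D` divides `Im_h(au conj u) = Im_h(a) N(u)`,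
  and likewise `Im_h(a) N(v)`. As `Im_h(a)` is `0` or `±1`, this forces `a = ±1` unless `D` divides
  `N(u)` and `N(v)`.

Composing any other reflection of the point group with `z ↦ ξ conj z` gives a rotation by `±1`.
-/

open QuadraticAlgebra ComplexConjugate

section Plane

variable {Γ₁ Γ₂ : AddSubgroup ℂ}

theorem IsColorSymmetry.comp {g h : ℂ → ℂ} (hg : IsColorSymmetry Γ₁ Γ₂ g)
    (hh : IsColorSymmetry Γ₁ Γ₂ h) (hmaps : Set.MapsTo h Γ₁ Γ₁) :
    IsColorSymmetry Γ₁ Γ₂ (g ∘ h) := by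
  obtain ⟨σ, hσ⟩ := hg
  obtain ⟨τ, hτ⟩ := hh
  refine ⟨σ * τ, fun ℓ hℓ => ?_⟩
  rw [Function.comp_apply, hσ _ (hmaps hℓ), hτ ℓ hℓ, Equiv.Perm.mul_apply]

theorem IsColorSymmetry.apply_mem_iff {g : ℂ → ℂ} (hg : IsColorSymmetry Γ₁ Γ₂ g) (h0 : g 0 = 0)
    {z : ℂ} (hz : z ∈ Γ₁) : g z ∈ Γ₂ ↔ z ∈ Γ₂ := by
  obtain ⟨σ, hσ⟩ := hg
  have hσ0 : σ 0 = 0 := by simpa [h0] using (hσ 0 Γ₁.zero_mem).symm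
  rw [← QuotientAddGroup.eq_zero_iff, hσ z hz, ← hσ0, σ.apply_eq_iff_eq,
    QuotientAddGroup.eq_zero_iff]

theorem isColorSymmetry_of_image_eq (e : ℂ ≃ₗᵢ[ℝ] ℂ) (h : e '' Γ₂ = Γ₂) :
    IsColorSymmetry Γ₁ Γ₂ e :=
  ⟨(QuotientAddGroup.congr Γ₂ Γ₂ e.toLinearEquiv.toAddEquiv
    (SetLike.coe_injective h)).toEquiv, fun _ _ => rfl⟩

theorem mem_pointColorGroup_iff (hle : Γ₂ ≤ Γ₁) {g : ℂ → ℂ} :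
    g ∈ pointColorGroup Γ₁ Γ₂ ↔
      ∃ e : ℂ ≃ₗᵢ[ℝ] ℂ, ⇑e = g ∧ e '' Γ₁ = Γ₁ ∧ e '' Γ₂ = Γ₂ := by
  constructor
  · rintro ⟨hiso, hsurj, h0, him, hcol⟩
    let f : ℂ ≃ᵢ ℂ := ⟨Equiv.ofBijective g ⟨hiso.injective, hsurj⟩, hiso⟩
    refine ⟨f.toRealLinearIsometryEquivOfMapZero h0, rfl, him, Set.Subset.antisymm ?_ ?_⟩
    · rintro _ ⟨z, hz, rfl⟩
      exact (hcol.apply_mem_iff h0 (hle hz)).2 hz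
    · intro w hw
      obtain ⟨z, hz, rfl⟩ := him.symm.subset (hle hw)
      exact ⟨z, (hcol.apply_mem_iff h0 hz).1 hw, rfl⟩
  · rintro ⟨e, rfl, h₁, h₂⟩
    exact ⟨e.isometry, e.surjective, map_zero e, h₁, isColorSymmetry_of_image_eq e h₂⟩

theorem comp_mem_pointColorGroup {g h : ℂ → ℂ} (hg : g ∈ pointColorGroup Γ₁ Γ₂)
    (hh : h ∈ pointColorGroup Γ₁ Γ₂) : g ∘ h ∈ pointColorGroup Γ₁ Γ₂ := by
  obtain ⟨hgi, hgs, hg0, hgΓ, hgc⟩ := hg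
  obtain ⟨hhi, hhs, hh0, hhΓ, hhc⟩ := hh
  refine ⟨hgi.comp hhi, hgs.comp hhs, by simp [hh0, hg0], ?_,
    hgc.comp hhc (Set.mapsTo_iff_image_subset.2 hhΓ.subset)⟩
  rw [Set.image_comp, hhΓ, hgΓ]

theorem image_eq_of_involutive {α : Type*} {f : α → α} {s : Set α} (hf : Function.Involutive f)
    (hs : Set.MapsTo f s s) : f '' s = s :=
  hs.image_subset.antisymm fun x hx => ⟨f x, hs hx, hf x⟩

theorem mem_pointColorGroup_of_involutive (hle : Γ₂ ≤ Γ₁) (e : ℂ ≃ₗᵢ[ℝ] ℂ)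
    (he : Function.Involutive e) (h₁ : Set.MapsTo e Γ₁ Γ₁) (h₂ : Set.MapsTo e Γ₂ Γ₂) :
    ⇑e ∈ pointColorGroup Γ₁ Γ₂ :=
  (mem_pointColorGroup_iff hle).2
    ⟨e, rfl, image_eq_of_involutive he h₁, image_eq_of_involutive he h₂⟩

theorem id_mem_pointColorGroup (hle : Γ₂ ≤ Γ₁) : (fun z => z) ∈ pointColorGroup Γ₁ Γ₂ :=
  mem_pointColorGroup_of_involutive hle (.refl ℝ ℂ) (fun _ => rfl) (fun _ => id) (fun _ => id)

theorem neg_mem_pointColorGroup (hle : Γ₂ ≤ Γ₁) : (fun z => -z) ∈ pointColorGroup Γ₁ Γ₂ :=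
  mem_pointColorGroup_of_involutive hle (.neg ℝ) neg_neg
    (fun _ => Γ₁.neg_mem) (fun _ => Γ₂.neg_mem)

theorem mul_conj_self_eq_one_of_norm_eq_one {c : ℂ} (hc : ‖c‖ = 1) : c * conj c = 1 := by
  simp [Complex.mul_conj', hc]

theorem mul_conj_mem_pointColorGroup (hle : Γ₂ ≤ Γ₁) {c : ℂ} (hc : ‖c‖ = 1)
    (h₁ : Set.MapsTo (fun z => c * conj z) Γ₁ Γ₁) (h₂ : Set.MapsTo (fun z => c * conj z) Γ₂ Γ₂) :
    (fun z => c * conj z) ∈ pointColorGroup Γ₁ Γ₂ := by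
  let e : ℂ ≃ₗᵢ[ℝ] ℂ := conjLIE.trans (rotation ⟨c, mem_sphere_zero_iff_norm.2 hc⟩)
  refine mem_pointColorGroup_of_involutive hle e (fun z => ?_) h₁ h₂
  change c * conj (c * conj z) = z
  rw [map_mul, Complex.conj_conj, ← mul_assoc, mul_conj_self_eq_one_of_norm_eq_one hc, one_mul]

theorem exists_eq_mul_or_eq_mul_conj_of_mem_pointColorGroup (hle : Γ₂ ≤ Γ₁) {g : ℂ → ℂ}
    (hg : g ∈ pointColorGroup Γ₁ Γ₂) :
    ∃ a : ℂ, (g = fun z => a * z) ∨ g = fun z => a * conj z := by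
  obtain ⟨e, rfl, -, -⟩ := (mem_pointColorGroup_iff hle).1 hg
  obtain ⟨a, rfl | rfl⟩ := linear_isometry_complex e
  · exact ⟨a, .inl rfl⟩
  · exact ⟨a, .inr rfl⟩

theorem norm_eq_one_of_mul_mem_pointColorGroup {a : ℂ}
    (ha : (fun z => a * z) ∈ pointColorGroup Γ₁ Γ₂) : ‖a‖ = 1 := by
  simpa using ha.1.norm_map_of_map_zero ha.2.2.1 1

theorem pointColorGroup_eq_of_reflection_mem (hle : Γ₂ ≤ Γ₁) {c : ℂ} (hc : ‖c‖ = 1)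
    (hrefl : (fun z => c * conj z) ∈ pointColorGroup Γ₁ Γ₂)
    (hrot : ∀ a : ℂ, (fun z => a * z) ∈ pointColorGroup Γ₁ Γ₂ → a = 1 ∨ a = -1) :
    pointColorGroup Γ₁ Γ₂ =
      {fun z => z, fun z => -z, fun z => c * conj z, fun z => -(c * conj z)} := by
  refine Set.Subset.antisymm (fun g hg => ?_) ?_
  · obtain ⟨a, rfl | rfl⟩ := exists_eq_mul_or_eq_mul_conj_of_mem_pointColorGroup hle hg
    · rcases hrot a hg with rfl | rfl <;> simp
    · have hcomp : (fun z => a * conj c * z) ∈ pointColorGroup Γ₁ Γ₂ := by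
        convert comp_mem_pointColorGroup hg hrefl using 2 with z
        simp [mul_assoc]
      have ha : a = a * conj c * c := by
        rw [mul_right_comm, mul_assoc, mul_conj_self_eq_one_of_norm_eq_one hc, mul_one]
      rcases hrot _ hcomp with h | h <;> rw [ha, h] <;> simp
  · rintro _ (rfl | rfl | rfl | rfl)
    · exact id_mem_pointColorGroup hle
    · exact neg_mem_pointColorGroup hle
    · exact hrefl
    · exact comp_mem_pointColorGroup (neg_mem_pointColorGroup hle) hrefl

end Plane

section QuadraticAlgebra

variable {R : Type*} [CommRing R] {a b : R}

theorem im_omega_mul_star (x : QuadraticAlgebra R a b) : (ω * star x).im = x.re := by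
  simp

theorem im_mul_star_comm (x y : QuadraticAlgebra R a b) :
    (y * star x).im = -(x * star y).im := by
  simp only [im_mul, re_star, im_star]
  ring

theorem im_mul_mul_star_self (r x : QuadraticAlgebra R a b) :
    (r * x * star x).im = r.im * x.norm := by
  rw [mul_assoc, ← algebraMap_norm_eq_mul_star]
  simp

theorem im_mul_star_smul_eq (x y w : QuadraticAlgebra R a b) :
    (x * star y).im • w = (w * star y).im • x - (w * star x).im • y := by
  ext <;> simp only
    [re_sub, im_sub, re_smul, im_smul, smul_eq_mul, im_mul, re_star, im_star] <;> ring

end QuadraticAlgebra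

section ClosurePair

variable {a b : ℤ} {u v w : QuadraticAlgebra ℤ a b}

theorem im_mul_star_dvd_of_mem_closure_pair (hw : w ∈ AddSubgroup.closure {u, v}) :
    (u * star v).im ∣ (w * star u).im ∧ (u * star v).im ∣ (w * star v).im := by
  obtain ⟨m, n, rfl⟩ := AddSubgroup.mem_closure_pair.1 hw
  have hself (x : QuadraticAlgebra ℤ a b) : (x * star x).im = 0 := by
    rw [← algebraMap_norm_eq_mul_star, algebraMap_im]
  simp only [add_mul, smul_mul_assoc, im_add, im_smul, smul_eq_mul, hself, im_mul_star_comm u v,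
    mul_zero, zero_add, add_zero, mul_neg, dvd_neg, dvd_mul_left, and_self]

theorem mem_closure_pair_of_im_mul_star_dvd (hne : (u * star v).im ≠ 0)
    (hu : (u * star v).im ∣ (w * star u).im) (hv : (u * star v).im ∣ (w * star v).im) :
    w ∈ AddSubgroup.closure {u, v} := by
  obtain ⟨n, hn⟩ := hu
  obtain ⟨m, hm⟩ := hv
  refine AddSubgroup.mem_closure_pair.2 ⟨m, -n, smul_right_injective _ hne ?_⟩
  simp only [im_mul_star_smul_eq u v w, hm, hn, smul_add, mul_smul, neg_smul, smul_neg,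
    sub_eq_add_neg]

theorem im_mul_star_dvd_im_mul_norm {r : QuadraticAlgebra ℤ a b}
    (hu : r * u ∈ AddSubgroup.closure {u, v}) (hv : r * v ∈ AddSubgroup.closure {u, v}) :
    (u * star v).im ∣ r.im * u.norm ∧ (u * star v).im ∣ r.im * v.norm := by
  rw [← im_mul_mul_star_self, ← im_mul_mul_star_self]
  exact ⟨(im_mul_star_dvd_of_mem_closure_pair hu).1, (im_mul_star_dvd_of_mem_closure_pair hv).2⟩

end ClosurePair

/-- The Eisenstein integers `ℤ[ω]`, `ω² = -1 - ω`; the components `re` and `im` of an element are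
its coordinates `Re_h` and `Im_h` in the basis `1, ω`, and `star` is complex conjugation. -/
abbrev EisensteinInt : Type := QuadraticAlgebra ℤ (-1) (-1)

namespace EisensteinInt

section Arithmetic

variable {u v z : EisensteinInt}

theorem im_eq_zero_or_isUnit_of_norm_eq_one (hz : z.norm = 1) : z.im = 0 ∨ IsUnit z.im := by
  rw [QuadraticAlgebra.norm_def] at hz
  have hle : z.im ≤ 1 := by nlinarith [sq_nonneg (2 * z.re - z.im)]
  have hge : -1 ≤ z.im := by nlinarith [sq_nonneg (2 * z.re - z.im)]
  rw [Int.isUnit_iff]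
  omega

theorem eq_one_or_eq_neg_one_of_norm_eq_one (hz : z.norm = 1) (him : z.im = 0) :
    z = 1 ∨ z = -1 := by
  have hre : z.re * z.re = 1 := by simpa [QuadraticAlgebra.norm_def, him] using hz
  rcases mul_self_eq_one_iff.1 hre with h | h
  · exact .inl (QuadraticAlgebra.ext h him)
  · exact .inr (QuadraticAlgebra.ext h him)

theorem eq_one_or_eq_neg_one_of_mul_mem_closure_pair (hz : z.norm = 1)
    (hu : z * u ∈ AddSubgroup.closure {u, v}) (hv : z * v ∈ AddSubgroup.closure {u, v})
    (hndvd : ¬ ((u * star v).im ∣ u.norm ∧ (u * star v).im ∣ v.norm)) : z = 1 ∨ z = -1 := by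
  refine eq_one_or_eq_neg_one_of_norm_eq_one hz ?_
  refine (im_eq_zero_or_isUnit_of_norm_eq_one hz).resolve_right fun hunit => hndvd ?_
  simpa only [hunit.dvd_mul_left] using im_mul_star_dvd_im_mul_norm hu hv

theorem eq_zero_of_norm_eq_zero (hz : z.norm = 0) : z = 0 := by
  rw [QuadraticAlgebra.norm_def] at hz
  have him : z.im = 0 := by nlinarith [sq_nonneg (2 * z.re - z.im), sq_nonneg z.im]
  have hre : z.re = 0 := by simpa [him] using hz
  exact QuadraticAlgebra.ext hre him

theorem omega_mul_star_eq_or_eq_neg (hu : (u ^ 2).re = 0) :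
    ω * star u = u ∨ ω * star u = -u := by
  have hsq : u.re * u.re = u.im * u.im := by
    simpa [sq, add_neg_eq_zero] using hu
  rcases mul_self_eq_mul_self_iff.1 hsq with h | h
  · left; ext <;> simp [h]
  · right; ext <;> simp [h]

theorem omega_mul_star_mem_closure_pair_left (huu : (u * star v).im ∣ (u ^ 2).re)
    (huv : (u * star v).im ∣ (u * v).re) : ω * star u ∈ AddSubgroup.closure {u, v} := by
  by_cases hdet : (u * star v).im = 0
  · have hmem : u ∈ AddSubgroup.closure {u, v} := AddSubgroup.subset_closure (by simp)
    rw [hdet, zero_dvd_iff] at huu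
    rcases omega_mul_star_eq_or_eq_neg huu with h | h <;> rw [h]
    · exact hmem
    · exact neg_mem hmem
  · apply mem_closure_pair_of_im_mul_star_dvd hdet
    · rwa [mul_assoc, ← star_mul, im_omega_mul_star, ← sq]
    · rwa [mul_assoc, ← star_mul, im_omega_mul_star, mul_comm v u]

theorem omega_mul_star_mem_closure_pair (huu : (u * star v).im ∣ (u ^ 2).re)
    (hvv : (u * star v).im ∣ (v ^ 2).re) (huv : (u * star v).im ∣ (u * v).re)
    (hz : z ∈ AddSubgroup.closure {u, v}) : ω * star z ∈ AddSubgroup.closure {u, v} := by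
  have hu := omega_mul_star_mem_closure_pair_left huu huv
  have hv : ω * star v ∈ AddSubgroup.closure {u, v} := by
    rw [Set.pair_comm]
    apply omega_mul_star_mem_closure_pair_left <;> rw [im_mul_star_comm u v, neg_dvd]
    · exact hvv
    · rwa [mul_comm v u]
  obtain ⟨m, n, rfl⟩ := AddSubgroup.mem_closure_pair.1 hz
  have hlin : ω * star (m • u + n • v) = m • (ω * star u) + n • (ω * star v) := by
    simp [mul_add, mul_left_comm]
  rw [hlin]
  exact add_mem (zsmul_mem hu m) (zsmul_mem hv n)

end Arithmetic

section Embedding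

theorem one_add_self_add_sq_eq_zero {R : Type*} [CommRing R] [IsDomain R] {ξ : R}
    (hξ : IsPrimitiveRoot ξ 3) : 1 + ξ + ξ ^ 2 = 0 := by
  simpa [Finset.sum_range_succ] using hξ.geom_sum_eq_zero (by norm_num)

theorem conj_eq_neg_one_sub_self {ξ : ℂ} (hξ : IsPrimitiveRoot ξ 3) : conj ξ = -1 - ξ := by
  have hmul : ξ * conj ξ = 1 :=
    mul_conj_self_eq_one_of_norm_eq_one (hξ.norm'_eq_one (by norm_num))
  apply mul_left_cancel₀ (hξ.ne_zero (by norm_num))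
  linear_combination hmul + one_add_self_add_sq_eq_zero hξ

variable {ξ : ℂ} (hξ : IsPrimitiveRoot ξ 3)

/-- The embedding of the Eisenstein integers into `ℂ` that sends `ω` to a given primitive cube root
of unity `ξ`. -/
noncomputable def toComplex : EisensteinInt →ₐ[ℤ] ℂ :=
  QuadraticAlgebra.lift ⟨ξ, by
    simp only [neg_smul, one_smul]
    linear_combination one_add_self_add_sq_eq_zero hξ⟩

theorem toComplex_apply (z : EisensteinInt) : toComplex hξ z = z.re + z.im * ξ := by
  simp [toComplex]

theorem conj_toComplex (z : EisensteinInt) : conj (toComplex hξ z) = toComplex hξ (star z) := by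
  simp only [toComplex_apply, map_add, map_mul, map_intCast, conj_eq_neg_one_sub_self hξ, re_star,
    im_star]
  push_cast
  ring

theorem self_mul_conj_toComplex (z : EisensteinInt) :
    ξ * conj (toComplex hξ z) = toComplex hξ (ω * star z) := by
  rw [conj_toComplex, map_mul, toComplex_apply hξ ω]
  simp

theorem toComplex_mul_conj (z : EisensteinInt) :
    toComplex hξ z * conj (toComplex hξ z) = z.norm := by
  rw [conj_toComplex, ← map_mul, ← algebraMap_norm_eq_mul_star]
  simp

theorem norm_eq_one_of_norm_toComplex_eq_one {z : EisensteinInt} (hz : ‖toComplex hξ z‖ = 1) :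
    z.norm = 1 := by
  have h := toComplex_mul_conj hξ z
  rw [Complex.mul_conj', hz] at h
  exact_mod_cast h.symm

theorem toComplex_injective : Function.Injective (toComplex hξ) := by
  refine (injective_iff_map_eq_zero _).2 fun z hz => eq_zero_of_norm_eq_zero ?_
  have h := toComplex_mul_conj hξ z
  rw [hz, zero_mul] at h
  exact_mod_cast h.symm

theorem closure_one_self_eq_range :
    AddSubgroup.closure {1, ξ} = (toComplex hξ : EisensteinInt →+ ℂ).range := by
  ext x
  rw [AddSubgroup.mem_closure_pair]
  constructor
  · rintro ⟨m, n, rfl⟩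
    exact ⟨⟨m, n⟩, by simp [toComplex_apply]⟩
  · rintro ⟨z, rfl⟩
    exact ⟨z.re, z.im, by simp [toComplex_apply]⟩

theorem closure_toComplex_pair (u v : EisensteinInt) :
    AddSubgroup.closure {toComplex hξ u, toComplex hξ v} =
      (AddSubgroup.closure {u, v}).map (toComplex hξ : EisensteinInt →+ ℂ) := by
  rw [AddMonoidHom.map_closure, Set.image_pair]
  rfl

end Embedding

section PointColorGroup

variable {ξ : ℂ} (hξ : IsPrimitiveRoot ξ 3) {Λ : AddSubgroup EisensteinInt}

theorem reflection_mem_pointColorGroup (hΛ : ∀ z ∈ Λ, ω * star z ∈ Λ) :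
    (fun z => ξ * conj z) ∈ pointColorGroup (toComplex hξ : EisensteinInt →+ ℂ).range
      (Λ.map (toComplex hξ : EisensteinInt →+ ℂ)) := by
  refine mul_conj_mem_pointColorGroup (AddSubgroup.map_le_range _ _)
    (hξ.norm'_eq_one (by norm_num)) ?_ ?_
  · rintro _ ⟨z, rfl⟩
    exact ⟨ω * star z, (self_mul_conj_toComplex hξ z).symm⟩
  · rintro _ ⟨z, hz, rfl⟩
    exact ⟨ω * star z, hΛ z hz, (self_mul_conj_toComplex hξ z).symm⟩

theorem exists_toComplex_eq_of_rotation_mem_pointColorGroup {a : ℂ}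
    (ha : (fun z => a * z) ∈ pointColorGroup (toComplex hξ : EisensteinInt →+ ℂ).range
      (Λ.map (toComplex hξ : EisensteinInt →+ ℂ))) :
    ∃ r : EisensteinInt, toComplex hξ r = a ∧ r.norm = 1 ∧ ∀ z ∈ Λ, r * z ∈ Λ := by
  obtain ⟨-, -, h0, him, hcol⟩ := id ha
  obtain ⟨r, hr⟩ : a ∈ (toComplex hξ : EisensteinInt →+ ℂ).range :=
    him.subset ⟨1, ⟨1, map_one (toComplex hξ)⟩, mul_one a⟩
  replace hr : toComplex hξ r = a := hr
  refine ⟨r, hr, norm_eq_one_of_norm_toComplex_eq_one hξ ?_, fun z hz => ?_⟩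
  · rw [hr, norm_eq_one_of_mul_mem_pointColorGroup ha]
  · have hmem := (hcol.apply_mem_iff h0 ⟨z, rfl⟩).2 (AddSubgroup.mem_map_of_mem _ hz)
    rw [← hr] at hmem
    obtain ⟨w, hw, hwz⟩ := hmem
    rwa [← toComplex_injective hξ (hwz.trans (map_mul (toComplex hξ) r z).symm)]

theorem pointColorGroup_map_closure_pair {u v : EisensteinInt}
    (huu : (u * star v).im ∣ (u ^ 2).re) (hvv : (u * star v).im ∣ (v ^ 2).re)
    (huv : (u * star v).im ∣ (u * v).re)
    (hndvd : ¬ ((u * star v).im ∣ u.norm ∧ (u * star v).im ∣ v.norm)) :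
    pointColorGroup (toComplex hξ : EisensteinInt →+ ℂ).range
        ((AddSubgroup.closure {u, v}).map (toComplex hξ : EisensteinInt →+ ℂ)) =
      {fun z => z, fun z => -z, fun z => ξ * conj z, fun z => -(ξ * conj z)} := by
  refine pointColorGroup_eq_of_reflection_mem (AddSubgroup.map_le_range _ _)
    (hξ.norm'_eq_one (by norm_num))
    (reflection_mem_pointColorGroup hξ fun z => omega_mul_star_mem_closure_pair huu hvv huv)
    fun a ha => ?_
  obtain ⟨r, rfl, hr, hmul⟩ := exists_toComplex_eq_of_rotation_mem_pointColorGroup hξ ha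
  have hu : r * u ∈ AddSubgroup.closure {u, v} := hmul u (AddSubgroup.subset_closure (by simp))
  have hv : r * v ∈ AddSubgroup.closure {u, v} := hmul v (AddSubgroup.subset_closure (by simp))
  rcases eq_one_or_eq_neg_one_of_mul_mem_closure_pair hr hu hv hndvd with rfl | rfl <;> simp

end PointColorGroup

end EisensteinInt

theorem isPrimitiveRoot_exp_two_pi_mul_I_div_three :
    IsPrimitiveRoot (exp (2 * (Real.pi : ℂ) * I / 3)) 3 := by
  simpa using isPrimitiveRoot_exp 3 (by norm_num)

theorem exp_pi_mul_I_div_three_sq :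
    exp ((Real.pi : ℂ) * I / 3) ^ 2 = exp (2 * (Real.pi : ℂ) * I / 3) := by
  rw [← Complex.exp_nat_mul]
  congr 1
  push_cast
  ring

open EisensteinInt in
theorem pointColorGroup_cmm_d_general {ξ : ℂ} (hξ : IsPrimitiveRoot ξ 3) {u v : ℂ}
    {a₁ a₂ b₁ b₂ : ℤ} (hu : u = a₁ + a₂ * ξ) (hv : v = b₁ + b₂ * ξ)
    {p₁ p₂ nu nv q₁ q₂ r₁ r₂ s₁ s₂ : ℤ}
    (hp : u * conj v = p₁ + p₂ * ξ) (hnu : u * conj u = nu) (hnv : v * conj v = nv)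
    (hq : u ^ 2 = q₁ + q₂ * ξ) (hr : v ^ 2 = r₁ + r₂ * ξ) (hs : u * v = s₁ + s₂ * ξ)
    (hdvd : p₂ ∣ q₁ ∧ p₂ ∣ r₁ ∧ p₂ ∣ s₁) (hndvd : ¬ (p₂ ∣ nu ∧ p₂ ∣ nv)) :
    pointColorGroup (AddSubgroup.closure {1, ξ}) (AddSubgroup.closure {u, v}) =
      {fun z => z, fun z => -z, fun z => ξ * conj z, fun z => -(ξ * conj z)} := by
  obtain ⟨U, rfl⟩ : ∃ U, toComplex hξ U = u := ⟨⟨a₁, a₂⟩, by rw [hu, toComplex_apply]⟩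
  obtain ⟨V, rfl⟩ : ∃ V, toComplex hξ V = v := ⟨⟨b₁, b₂⟩, by rw [hv, toComplex_apply]⟩
  have coords {z : EisensteinInt} {m n : ℤ} (h : toComplex hξ z = m + n * ξ) : z = ⟨m, n⟩ :=
    toComplex_injective hξ (by rw [h, toComplex_apply])
  rw [conj_toComplex, ← map_mul] at hp
  rw [← map_pow] at hq hr
  rw [← map_mul] at hs
  rw [toComplex_mul_conj, Int.cast_inj] at hnu hnv
  obtain ⟨huu, hvv, huv⟩ := hdvd
  rw [closure_one_self_eq_range hξ, closure_toComplex_pair]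
  apply pointColorGroup_map_closure_pair hξ <;> rw [coords hp]
  · rwa [coords hq]
  · rwa [coords hr]
  · rwa [coords hs]
  · rwa [hnu, hnv]

/-- Case (d) for the hexagonal lattice `Γ₁ = ℤ[ξ]`, `ξ = e^{2πi/3}`: if
`Im_h(u·conj v)` divides all of `Re_h(u²)`, `Re_h(v²)`, `Re_h(uv)` but none of `N(u)`,
`N(v)`, `Re_h(u·conj v)`, then the point group of the color group of the coloring of
`Γ₁` determined by `Γ₂ = ⟨u, v⟩_ℤ` has order `4`, consisting of the identity, the
`180°`-rotation, and a pair `{s, -s}` of reflections from the point group of `ℤ[ξ]`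
(type `cmm`). -/
theorem pointColorGroup_cmm_d (ξ ζ : ℂ)
    (hξ : ξ = Complex.exp (2 * (Real.pi : ℂ) * I / 3))
    (hζ : ζ = Complex.exp ((Real.pi : ℂ) * I / 3))
    (u v : ℂ) (a₁ a₂ b₁ b₂ : ℤ)
    (hu : u = a₁ + a₂ * ξ) (hv : v = b₁ + b₂ * ξ)
    (hind : LinearIndependent ℝ ![u, v])
    (Γ₁ Γ₂ : AddSubgroup ℂ)
    (hΓ₁ : Γ₁ = AddSubgroup.closure ({1, ξ} : Set ℂ))
    (hΓ₂ : Γ₂ = AddSubgroup.closure ({u, v} : Set ℂ))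
    (p₁ p₂ nu nv q₁ q₂ r₁ r₂ s₁ s₂ : ℤ)
    (hp : u * starRingEnd ℂ v = p₁ + p₂ * ξ)
    (hnu : u * starRingEnd ℂ u = (nu : ℂ))
    (hnv : v * starRingEnd ℂ v = (nv : ℂ))
    (hq : u ^ 2 = q₁ + q₂ * ξ)
    (hr : v ^ 2 = r₁ + r₂ * ξ)
    (hs : u * v = s₁ + s₂ * ξ)
    (hdvd : p₂ ∣ q₁ ∧ p₂ ∣ r₁ ∧ p₂ ∣ s₁)
    (hndvd : ¬ p₂ ∣ nu ∧ ¬ p₂ ∣ nv ∧ ¬ p₂ ∣ p₁) :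
    ∃ k : Fin 6, pointColorGroup Γ₁ Γ₂ =
      {fun z => z, fun z => -z, fun z => ζ ^ (k : ℕ) * starRingEnd ℂ z,
        fun z => -(ζ ^ (k : ℕ) * starRingEnd ℂ z)} := by
  subst hξ hζ hΓ₁ hΓ₂
  refine ⟨2, ?_⟩
  rw [Fin.val_two, exp_pi_mul_I_div_three_sq]
  exact pointColorGroup_cmm_d_general isPrimitiveRoot_exp_two_pi_mul_I_div_three
    hu hv hp hnu hnv hq hr hs hdvd fun h => hndvd.1 h.1
end

section
/- Let ξ = e^{iπ/4} and let M₂ = ⟨1, 2ξ, ξ², 2ξ³⟩_ℤ be the ℤ-submodule of ℤ[ξ] generated by 1, 2ξ, ξ², and 2ξ³. Then M₂ is invariant under multiplication by ξ² = i (i.e., ξ²·M₂ = M₂) and under complex conjugation (conj(M₂) = M₂), but M₂ is not invariant under multiplication by ξ (ξ·M₂ ≠ M₂). Consequently, the subgroup of the dihedral point group D₈ of ℤ[ξ] (generated by the 45°-rotation z ↦ ξz and conjugation z ↦ conj(z)) that leaves M₂ invariant is exactly the dihedral group of order 8 generated by z ↦ ξ²z and z ↦ conj(z). -/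
open Complex

/-!
Since `ξ⁴ = -1`, multiplication by `ξ²` and conjugation permute the generators `1`, `2ξ`, `ξ²`,
`2ξ³` up to sign, so both preserve `M₂`. Multiplication by `ξ` does not: it would put `ξ = ξ · 1`
into `M₂`, and comparing coefficients of `ξ` in the `ℤ`-independent family `1, ξ, ξ², ξ³` would
make `2` a unit of `ℤ`. As `ξ²` stabilises `M₂` and `ξ` does not, `ξᵏ` stabilises `M₂` exactly when
`k` is even; the reflections `z ↦ ξᵏ conj z` behave in the same way because `conj` preserves `M₂`.
-/

/-- The submodule `⟨1, cx, x², cx³⟩_ℤ` of `ℤ[x]`, obtained by stretching the odd powers of `x` by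
`c`. The module `M₂` of the theorem is the case `c = 2`, `x = e^{iπ/4}`. -/
def oddScaledSpan {R : Type*} [Ring R] (c : ℤ) (x : R) : Submodule ℤ R :=
  Submodule.span ℤ {1, c * x, x ^ 2, c * x ^ 3}

namespace oddScaledSpan

section Ring

variable {R : Type*} [Ring R] {c : ℤ} {x : R}

theorem mem_iff {z : R} :
    z ∈ oddScaledSpan c x ↔
      ∃ a₁ a₂ a₃ a₄ : ℤ, z = a₁ * 1 + a₂ * (c * x) + a₃ * x ^ 2 + a₄ * (c * x ^ 3) := by
  simp only [oddScaledSpan, Submodule.mem_span_insert, Submodule.mem_span_singleton, zsmul_eq_mul]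
  grind

theorem one_mem : 1 ∈ oddScaledSpan c x :=
  Submodule.subset_span (by simp)

theorem mul_self_mem : c * x ∈ oddScaledSpan c x :=
  Submodule.subset_span (by simp)

theorem sq_mem : x ^ 2 ∈ oddScaledSpan c x :=
  Submodule.subset_span (by simp)

theorem mul_cube_mem : c * x ^ 3 ∈ oddScaledSpan c x :=
  Submodule.subset_span (by simp)

theorem mapsTo_of_generators {f : R →+ R} (h₀ : f 1 ∈ oddScaledSpan c x)
    (h₁ : f (c * x) ∈ oddScaledSpan c x) (h₂ : f (x ^ 2) ∈ oddScaledSpan c x)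
    (h₃ : f (c * x ^ 3) ∈ oddScaledSpan c x) :
    Set.MapsTo f (oddScaledSpan c x) (oddScaledSpan c x) := by
  have hle : (oddScaledSpan c x).map f.toIntLinearMap ≤ oddScaledSpan c x := by
    rw [oddScaledSpan, Submodule.map_span_le]
    rintro _ (rfl | rfl | rfl | rfl) <;> assumption
  exact Submodule.map_le_iff_le_comap.mp hle

theorem isUnit_of_self_mem (hli : LinearIndependent ℤ fun i : Fin 4 => x ^ (i : ℕ))
    (hx : x ∈ oddScaledSpan c x) : IsUnit c := by
  obtain ⟨a₁, a₂, a₃, a₄, h⟩ := mem_iff.mp hx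
  have hrel : ∑ i : Fin 4, ![a₁, a₂ * c - 1, a₃, a₄ * c] i • x ^ (i : ℕ) = 0 :=
    calc ∑ i : Fin 4, ![a₁, a₂ * c - 1, a₃, a₄ * c] i • x ^ (i : ℕ)
      _ = a₁ * 1 + a₂ * (c * x) + a₃ * x ^ 2 + a₄ * (c * x ^ 3) - x := by
        simp [Fin.sum_univ_four, sub_mul, mul_assoc]
        abel
      _ = 0 := sub_eq_zero.mpr h.symm
  have hcoeff : a₂ * c - 1 = 0 := Fintype.linearIndependent_iff.mp hli _ hrel 1
  exact IsUnit.of_mul_eq_one_right a₂ (sub_eq_zero.mp hcoeff)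

theorem image_self_mul_ne (hli : LinearIndependent ℤ fun i : Fin 4 => x ^ (i : ℕ))
    (hc : ¬IsUnit c) : (fun z => x * z) '' oddScaledSpan c x ≠ oddScaledSpan c x := by
  intro himage
  have hx : x ∈ oddScaledSpan c x := by
    simpa using himage.subset (Set.mem_image_of_mem _ one_mem)
  exact hc (isUnit_of_self_mem hli hx)

end Ring

section CommRing

variable {R : Type*} [CommRing R] {c : ℤ} {x : R}

theorem mapsTo_sq_mul (hx : x ^ 4 = -1) :
    Set.MapsTo (fun z => x ^ 2 * z) (oddScaledSpan c x) (oddScaledSpan c x) := by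
  refine mapsTo_of_generators (f := AddMonoidHom.mulLeft (x ^ 2)) ?_ ?_ ?_ ?_ <;>
    rw [AddMonoidHom.coe_mulLeft]
  · rw [mul_one]
    exact sq_mem
  · rw [show x ^ 2 * (c * x) = c * x ^ 3 by ring]
    exact mul_cube_mem
  · rw [show x ^ 2 * x ^ 2 = -1 by linear_combination hx]
    exact neg_mem one_mem
  · rw [show x ^ 2 * (c * x ^ 3) = -(c * x) by linear_combination c * x * hx]
    exact neg_mem mul_self_mem

theorem image_sq_mul (hx : x ^ 4 = -1) :
    (fun z => x ^ 2 * z) '' oddScaledSpan c x = oddScaledSpan c x := by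
  have hinv : Set.InvOn (fun z => -(x ^ 2 * z)) (fun z => x ^ 2 * z)
      (oddScaledSpan c x) (oddScaledSpan c x) :=
    ⟨fun z _ => by linear_combination -z * hx, fun z _ => by linear_combination -z * hx⟩
  exact (hinv.bijOn (mapsTo_sq_mul hx) fun z hz => neg_mem (mapsTo_sq_mul hx hz)).image_eq

variable [StarRing R]

theorem mapsTo_conj (hx : x ^ 4 = -1) (hconj : starRingEnd R x * x = 1) :
    Set.MapsTo (starRingEnd R) (oddScaledSpan c x) (oddScaledSpan c x) := by
  have hconj_eq : starRingEnd R x = -x ^ 3 := by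
    linear_combination starRingEnd R x * hx - x ^ 3 * hconj
  refine mapsTo_of_generators (f := (starRingEnd R : R →+ R)) ?_ ?_ ?_ ?_ <;>
    simp only [AddMonoidHom.coe_coe, map_mul, map_pow, map_intCast, map_one, hconj_eq]
  · exact one_mem
  · rw [mul_neg]
    exact neg_mem mul_cube_mem
  · rw [show (-x ^ 3) ^ 2 = -x ^ 2 by linear_combination x ^ 2 * hx]
    exact neg_mem sq_mem
  · rw [show c * (-x ^ 3) ^ 3 = -(c * x) by linear_combination (c * x - c * x ^ 5) * hx]
    exact neg_mem mul_self_mem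

theorem image_conj (hx : x ^ 4 = -1) (hconj : starRingEnd R x * x = 1) :
    starRingEnd R '' oddScaledSpan c x = oddScaledSpan c x := by
  have hinv : Set.InvOn (starRingEnd R) (starRingEnd R) (oddScaledSpan c x)
      (oddScaledSpan c x) :=
    ⟨fun z _ => star_star z, fun z _ => star_star z⟩
  exact (hinv.bijOn (mapsTo_conj hx hconj) (mapsTo_conj hx hconj)).image_eq

end CommRing

end oddScaledSpan

theorem pow_mem_iff_even_of_sq_mem {G : Type*} [Group G] {H : Subgroup G} {g : G}
    (hsq : g ^ 2 ∈ H) (hg : g ∉ H) {k : ℕ} : g ^ k ∈ H ↔ Even k := by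
  obtain ⟨j, rfl | rfl⟩ := k.even_or_odd'
  · simp [pow_mul, pow_mem hsq j]
  · rw [pow_succ, pow_mul, H.mul_mem_cancel_left (pow_mem hsq j)]
    simp [hg]

open Pointwise in
theorem image_pow_mul_eq_iff_even {M : Type*} [Monoid M] {x : M} {s : Set M} (hx : IsUnit x)
    (hsq : (fun z => x ^ 2 * z) '' s = s) (hs : (fun z => x * z) '' s ≠ s) {k : ℕ} :
    (fun z => x ^ k * z) '' s = s ↔ Even k := by
  obtain ⟨u, rfl⟩ := hx
  have hmem (n : ℕ) : u ^ n ∈ MulAction.stabilizer Mˣ s ↔ (fun z => (u : M) ^ n * z) '' s = s := by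
    rw [MulAction.mem_stabilizer_iff, ← Units.val_pow_eq_pow_val]
    rfl
  rw [← hmem]
  exact pow_mem_iff_even_of_sq_mem ((hmem 2).mpr hsq) fun hu =>
    hs (by simpa using (hmem 1).mp (by simpa using hu))

theorem exists_fin_two_mul_even_iff {n : ℕ} {p : ℕ → Prop} :
    (∃ k : Fin (2 * n), Even (k : ℕ) ∧ p k) ↔ ∃ j : Fin n, p (2 * j) := by
  constructor
  · rintro ⟨⟨k, hk⟩, heven, hp⟩
    obtain ⟨j, rfl⟩ := heven.two_dvd
    exact ⟨⟨j, by omega⟩, hp⟩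
  · rintro ⟨j, hp⟩
    exact ⟨⟨2 * j, by omega⟩, even_two_mul _, hp⟩

/-- The dihedral set of maps `z ↦ xᵏz` and `z ↦ xᵏσ(z)` with `k < n`, for a rotation `x` of order
`n` and a reflection `σ`. The point group `D₈` is `dihedralMaps 8 ξ conj`; it is kept as a set of
functions because the theorem compares sets of functions. -/
def dihedralMaps {M : Type*} [Monoid M] (n : ℕ) (x : M) (σ : M → M) : Set (M → M) :=
  {g | ∃ k : Fin n, g = (fun z => x ^ (k : ℕ) * z) ∨ g = (fun z => x ^ (k : ℕ) * σ z)}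

theorem setOf_mem_dihedralMaps_image_eq_self {M : Type*} [Monoid M] {n : ℕ} {x : M} {σ : M → M}
    {s : Set M} (hx : IsUnit x) (hσ : σ '' s = s) (hsq : (fun z => x ^ 2 * z) '' s = s)
    (hs : (fun z => x * z) '' s ≠ s) :
    {g ∈ dihedralMaps (2 * n) x σ | g '' s = s} = dihedralMaps n (x ^ 2) σ := by
  ext g
  have himage {k : ℕ} (hg : g = (fun z => x ^ k * z) ∨ g = (fun z => x ^ k * σ z)) :
      g '' s = s ↔ Even k := by
    rw [← image_pow_mul_eq_iff_even hx hsq hs]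
    rcases hg with rfl | rfl
    · rfl
    · rw [← Set.image_image (fun z => x ^ k * z) σ, hσ]
  calc g ∈ {g ∈ dihedralMaps (2 * n) x σ | g '' s = s}
    _ ↔ ∃ k : Fin (2 * n), Even (k : ℕ) ∧
          (g = (fun z => x ^ (k : ℕ) * z) ∨ g = (fun z => x ^ (k : ℕ) * σ z)) := by
      simp only [dihedralMaps, Set.mem_ofPred_eq, ← exists_and_right]
      exact exists_congr fun k => ⟨fun h => ⟨(himage h.1).mp h.2, h.1⟩,
        fun h => ⟨h.2, (himage h.2).mpr h.1⟩⟩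
    _ ↔ g ∈ dihedralMaps n (x ^ 2) σ := by
      rw [exists_fin_two_mul_even_iff
        (p := fun k => g = (fun z => x ^ k * z) ∨ g = (fun z => x ^ k * σ z))]
      simp only [dihedralMaps, Set.mem_ofPred_eq, pow_mul]

theorem linearIndependent_int_pow_of_isPrimitiveRoot {K : Type*} [Field K] [CharZero K]
    {ζ : K} {n : ℕ} [NeZero n] (hζ : IsPrimitiveRoot ζ n) :
    LinearIndependent ℤ fun i : Fin n.totient => ζ ^ (i : ℕ) := by
  have hdeg : (minpoly ℚ ζ).natDegree = n.totient := by
    rw [← Polynomial.cyclotomic_eq_minpoly_rat hζ (NeZero.pos n), Polynomial.natDegree_cyclotomic]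
  rw [← hdeg]
  exact (linearIndependent_pow ζ).restrict_scalars' ℤ

theorem pow_eq_neg_one_of_isPrimitiveRoot_two_mul {R : Type*} [CommRing R] [NoZeroDivisors R]
    {ζ : R} {n : ℕ} [NeZero n] (hζ : IsPrimitiveRoot ζ (2 * n)) : ζ ^ n = -1 :=
  (hζ.pow (NeZero.pos _) (mul_comm 2 n)).eq_neg_one_of_two_right

theorem conj_mul_self_of_isPrimitiveRoot {ζ : ℂ} {n : ℕ} [NeZero n] (hζ : IsPrimitiveRoot ζ n) :
    starRingEnd ℂ ζ * ζ = 1 := by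
  simp [Complex.conj_mul', hζ.norm'_eq_one (NeZero.ne n)]

theorem isPrimitiveRoot_exp_pi_mul_I_div_four :
    IsPrimitiveRoot (exp ((Real.pi : ℂ) * I / 4)) 8 := by
  convert Complex.isPrimitiveRoot_exp 8 (by norm_num) using 2
  push_cast
  ring

theorem amannBeenker_D4_coloring_general {K : Type*} [Field K] [CharZero K] [StarRing K] {ξ : K}
    (hξ : IsPrimitiveRoot ξ 8) (hconj : starRingEnd K ξ * ξ = 1) {c : ℤ} (hc : ¬IsUnit c) :
    (fun z => ξ ^ 2 * z) '' oddScaledSpan c ξ = oddScaledSpan c ξ ∧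
    starRingEnd K '' oddScaledSpan c ξ = oddScaledSpan c ξ ∧
    (fun z => ξ * z) '' oddScaledSpan c ξ ≠ oddScaledSpan c ξ ∧
    {g ∈ dihedralMaps 8 ξ (starRingEnd K) | g '' oddScaledSpan c ξ = oddScaledSpan c ξ} =
      dihedralMaps 4 (ξ ^ 2) (starRingEnd K) := by
  have hξ4 : ξ ^ 4 = -1 := pow_eq_neg_one_of_isPrimitiveRoot_two_mul hξ
  have hsq := oddScaledSpan.image_sq_mul (c := c) hξ4
  have hstar := oddScaledSpan.image_conj (c := c) hξ4 hconj
  have hself := oddScaledSpan.image_self_mul_ne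
    (linearIndependent_int_pow_of_isPrimitiveRoot hξ) hc
  exact ⟨hsq, hstar, hself,
    setOf_mem_dihedralMaps_image_eq_self (n := 4) (hξ.isUnit (by norm_num)) hstar hsq hself⟩

/-- Let `ξ = e^{iπ/4}` and `M₂ = ⟨1, 2ξ, ξ², 2ξ³⟩_ℤ ⊆ ℤ[ξ] ⊆ ℂ`.  Then `M₂` is
invariant under multiplication by `ξ² = i` and under complex conjugation, but not under
multiplication by `ξ`; consequently the subgroup of the dihedral point group `D₈` of
`ℤ[ξ]` (generated by `z ↦ ξz` and `z ↦ conj z`) leaving `M₂` invariant is exactly the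
dihedral group of order `8` generated by `z ↦ ξ²z` and `z ↦ conj z`. -/
theorem amannBeenker_D4_coloring (ξ : ℂ)
    (hξ : ξ = Complex.exp ((Real.pi : ℂ) * I / 4))
    (M₂ : Set ℂ)
    (hM₂ : M₂ = {z | ∃ a₁ a₂ a₃ a₄ : ℤ,
      z = a₁ * 1 + a₂ * (2 * ξ) + a₃ * ξ ^ 2 + a₄ * (2 * ξ ^ 3)}) :
    (fun z => ξ ^ 2 * z) '' M₂ = M₂ ∧
    (fun z => starRingEnd ℂ z) '' M₂ = M₂ ∧
    (fun z => ξ * z) '' M₂ ≠ M₂ ∧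
    {g : ℂ → ℂ | (∃ k : Fin 8, g = (fun z => ξ ^ (k : ℕ) * z) ∨
        g = (fun z => ξ ^ (k : ℕ) * starRingEnd ℂ z)) ∧ g '' M₂ = M₂} =
      {g : ℂ → ℂ | ∃ k : Fin 4, g = (fun z => (ξ ^ 2) ^ (k : ℕ) * z) ∨
        g = (fun z => (ξ ^ 2) ^ (k : ℕ) * starRingEnd ℂ z)} := by
  obtain rfl : M₂ = oddScaledSpan 2 ξ := by ext; simp [hM₂, oddScaledSpan.mem_iff]
  have hprim : IsPrimitiveRoot ξ 8 := hξ ▸ isPrimitiveRoot_exp_pi_mul_I_div_four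
  exact amannBeenker_D4_coloring_general hprim (conj_mul_self_of_isPrimitiveRoot hprim) (by decide)
end
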